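/- Let H be a complex Hilbert space and let G = U_∞(H) be the group of unitary operators u on H with u − 1 compact, equipped with the operator-norm topology. Then for every continuous unitary representation (π,K) of G on a complex Hilbert space K, every continuous 1-cocycle β : G → K is a 1-coboundary, i.e. H¹(G,π,K) = {0}. -/

import Mathlib

/-- The group `U_∞(H)` of unitary operators `u` on the complex Hilbert space `H` such that
`u - 1` is a compact operator, as a subgroup of the full unitary group of `H`.  As a subtype
of the bounded operators on `H` it automatically carries the operator-norm topology. -/
noncomputable def UinfGroup (H : Type*) [NormedAddCommGroup H] [InnerProductSpace ℂ H] [CompleteSpace H] :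
    Subgroup (unitary (H →L[ℂ] H)) where
  carrier := {u : unitary (H →L[ℂ] H) | IsCompactOperator (⇑((u : H →L[ℂ] H) - 1))}
  one_mem' := by
    have h : ((1 : unitary (H →L[ℂ] H)) : H →L[ℂ] H) - 1 = 0 := by
      rw [Submonoid.coe_one]; exact sub_self 1
    show IsCompactOperator _
    rw [h]
    exact isCompactOperator_zero
  mul_mem' := by
    intro u v hu hv
    have key : ((u * v : unitary (H →L[ℂ] H)) : H →L[ℂ] H) - 1 =
        (u : H →L[ℂ] H) * ((v : H →L[ℂ] H) - 1) + ((u : H →L[ℂ] H) - 1) := by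
      have hcoe : ((u * v : unitary (H →L[ℂ] H)) : H →L[ℂ] H)
          = (u : H →L[ℂ] H) * (v : H →L[ℂ] H) := rfl
      rw [hcoe]; noncomm_ring
    show IsCompactOperator _
    rw [key]
    have h1 : IsCompactOperator (⇑((u : H →L[ℂ] H) * ((v : H →L[ℂ] H) - 1))) := by
      have : ⇑((u : H →L[ℂ] H) * ((v : H →L[ℂ] H) - 1))
          = (u : H →L[ℂ] H) ∘ ⇑((v : H →L[ℂ] H) - 1) := rfl
      rw [this]
      exact hv.continuous_comp (u : H →L[ℂ] H).continuous
    have : ⇑((u : H →L[ℂ] H) * ((v : H →L[ℂ] H) - 1) + ((u : H →L[ℂ] H) - 1))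
        = ⇑((u : H →L[ℂ] H) * ((v : H →L[ℂ] H) - 1)) + ⇑((u : H →L[ℂ] H) - 1) := rfl
    rw [this]
    exact h1.add hu
  inv_mem' := by
    intro u hu
    have huu : ((u⁻¹ : unitary (H →L[ℂ] H)) : H →L[ℂ] H) * (u : H →L[ℂ] H) = 1 := by
      have : ((u⁻¹ * u : unitary (H →L[ℂ] H)) : H →L[ℂ] H)
          = ((u⁻¹ : unitary (H →L[ℂ] H)) : H →L[ℂ] H) * (u : H →L[ℂ] H) := rfl
      rw [← this, inv_mul_cancel u, Submonoid.coe_one]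
    have key : ((u⁻¹ : unitary (H →L[ℂ] H)) : H →L[ℂ] H) - 1 =
        -(((u⁻¹ : unitary (H →L[ℂ] H)) : H →L[ℂ] H) * ((u : H →L[ℂ] H) - 1)) := by
      rw [mul_sub, huu, mul_one]; abel
    show IsCompactOperator _
    rw [key]
    have h1 : IsCompactOperator
        (⇑(((u⁻¹ : unitary (H →L[ℂ] H)) : H →L[ℂ] H) * ((u : H →L[ℂ] H) - 1))) := by
      have : ⇑(((u⁻¹ : unitary (H →L[ℂ] H)) : H →L[ℂ] H) * ((u : H →L[ℂ] H) - 1))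
          = ((u⁻¹ : unitary (H →L[ℂ] H)) : H →L[ℂ] H) ∘ ⇑((u : H →L[ℂ] H) - 1) := rfl
      rw [this]
      exact hu.continuous_comp ((u⁻¹ : unitary (H →L[ℂ] H)) : H →L[ℂ] H).continuous
    have : ⇑(-(((u⁻¹ : unitary (H →L[ℂ] H)) : H →L[ℂ] H) * ((u : H →L[ℂ] H) - 1)))
        = -⇑(((u⁻¹ : unitary (H →L[ℂ] H)) : H →L[ℂ] H) * ((u : H →L[ℂ] H) - 1)) := rfl
    rw [this]
    exact h1.neg

/-!
A cocycle `β` is the translation part of the affine isometric action `g • x = π g x + β g`, and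
it is a coboundary as soon as this action has a fixed point.  In a Hilbert space an isometric
action with a bounded orbit fixes the Chebyshev centre of that orbit, so it suffices that the
orbits are bounded.  This holds because `U_∞(H)` is the `n`-th power of any neighbourhood `U`
of `1`, for some `n` depending on `U`: turning the `-1`-eigenspace of `u` by a quarter turn
writes `u` as a product of two elements at distance less than `2` from `1`, and such an element
`v` has the roots `v ^ (1 / n)`, which tend to `1` uniformly.  These roots stay in `U_∞(H)`
because the quotient `(z ^ (1 / n) - 1) / (z - 1)` extends continuously to the spectrum of `v`.
-/

open Filter Metric Topology
open scoped Pointwise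

section ChebyshevCentre

/-- The Chebyshev radius of a set: the infimum of the radii of the closed balls containing it.
It has the junk value `0` on unbounded sets. -/
noncomputable def chebyshevRadius {X : Type*} [PseudoMetricSpace X] (S : Set X) : ℝ :=
  sInf {r | ∃ c, S ⊆ closedBall c r}

section PseudoMetricSpace

variable {X : Type*} [PseudoMetricSpace X] {S : Set X} {c : X} {r : ℝ}

lemma nonneg_of_subset_closedBall (hS : S.Nonempty) (h : S ⊆ closedBall c r) : 0 ≤ r :=
  nonempty_closedBall.1 (hS.mono h)

lemma chebyshevRadius_nonneg (hS : S.Nonempty) : 0 ≤ chebyshevRadius S :=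
  Real.sInf_nonneg fun _ ⟨_, h⟩ => nonneg_of_subset_closedBall hS h

lemma chebyshevRadius_le (hS : S.Nonempty) (h : S ⊆ closedBall c r) : chebyshevRadius S ≤ r :=
  csInf_le ⟨0, fun _ ⟨_, h'⟩ => nonneg_of_subset_closedBall hS h'⟩ ⟨c, h⟩

lemma exists_subset_closedBall_of_chebyshevRadius_lt (hS : S.Nonempty)
    (hb : Bornology.IsBounded S) (hr : chebyshevRadius S < r) : ∃ c, S ⊆ closedBall c r := by
  obtain ⟨x, -⟩ := hS
  obtain ⟨R, hR⟩ := hb.subset_closedBall x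
  obtain ⟨r', ⟨c, hc⟩, hr'⟩ := exists_lt_of_csInf_lt (by exact ⟨R, x, hR⟩) hr
  exact ⟨c, hc.trans (closedBall_subset_closedBall hr'.le)⟩

end PseudoMetricSpace

variable {E : Type*} [NormedAddCommGroup E] [InnerProductSpace ℝ E] {S : Set E} {c d : E} {r : ℝ}

lemma closedBall_inter_closedBall_subset_closedBall_midpoint :
    closedBall c r ∩ closedBall d r ⊆
      closedBall (midpoint ℝ c d) (√(r ^ 2 - (dist c d / 2) ^ 2)) := by
  rintro s ⟨hc, hd⟩
  have apollonius :=
    EuclideanGeometry.dist_sq_add_dist_sq_eq_two_mul_dist_midpoint_sq_add_half_dist_sq s c d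
  have hc' : dist s c ^ 2 ≤ r ^ 2 := pow_le_pow_left₀ dist_nonneg hc 2
  have hd' : dist s d ^ 2 ≤ r ^ 2 := pow_le_pow_left₀ dist_nonneg hd 2
  exact Real.le_sqrt_of_sq_le (by linarith)

lemma dist_le_of_subset_closedBall (hS : S.Nonempty) (hc : S ⊆ closedBall c r)
    (hd : S ⊆ closedBall d r) : dist c d ≤ 2 * √(r ^ 2 - chebyshevRadius S ^ 2) := by
  have hmid := (Set.subset_inter hc hd).trans
    closedBall_inter_closedBall_subset_closedBall_midpoint
  have hdiam : dist c d / 2 ≤ r := by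
    obtain ⟨s, hs⟩ := hS
    linarith [dist_triangle_left c d s, mem_closedBall.1 (hc hs), mem_closedBall.1 (hd hs)]
  have hnonneg : 0 ≤ r ^ 2 - (dist c d / 2) ^ 2 :=
    sub_nonneg.2 (pow_le_pow_left₀ (by positivity) hdiam 2)
  have hle : chebyshevRadius S ^ 2 ≤ r ^ 2 - (dist c d / 2) ^ 2 :=
    (Real.le_sqrt (chebyshevRadius_nonneg hS) hnonneg).1 (chebyshevRadius_le hS hmid)
  rw [← div_le_iff₀' two_pos]
  exact Real.le_sqrt_of_sq_le (by linarith)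

theorem existsUnique_subset_closedBall_chebyshevRadius [CompleteSpace E] (hS : S.Nonempty)
    (hb : Bornology.IsBounded S) : ∃! c, S ⊆ closedBall c (chebyshevRadius S) := by
  have hcentre (n : ℕ) : ∃ c, S ⊆ closedBall c (chebyshevRadius S + 1 / (n + 1)) :=
    exists_subset_closedBall_of_chebyshevRadius_lt hS hb (lt_add_of_pos_right _ (by positivity))
  choose x hx using hcentre
  have hradius : Tendsto (fun n : ℕ => chebyshevRadius S + 1 / ((n : ℝ) + 1)) atTop
      (𝓝 (chebyshevRadius S)) := by
    simpa using tendsto_one_div_add_atTop_nhds_zero_nat.const_add (chebyshevRadius S)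
  have hcauchy : CauchySeq x := by
    refine cauchySeq_of_le_tendsto_0
      (fun N : ℕ => 2 * √((chebyshevRadius S + 1 / ((N : ℝ) + 1)) ^ 2 - chebyshevRadius S ^ 2))
      (fun n m N hn hm => dist_le_of_subset_closedBall hS
        ((hx n).trans (closedBall_subset_closedBall (by gcongr)))
        ((hx m).trans (closedBall_subset_closedBall (by gcongr)))) ?_
    have hcont : Continuous fun r : ℝ => 2 * √(r ^ 2 - chebyshevRadius S ^ 2) := by fun_prop
    exact (hcont.tendsto' _ 0 (by simp)).comp hradius
  obtain ⟨c, hc⟩ := cauchySeq_tendsto_of_complete hcauchy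
  have hSc : S ⊆ closedBall c (chebyshevRadius S) := fun s hs =>
    le_of_tendsto_of_tendsto' (tendsto_const_nhds.dist hc) hradius fun n => hx n hs
  refine ⟨c, hSc, fun d hd => dist_le_zero.1 ?_⟩
  exact (dist_le_of_subset_closedBall hS hd hSc).trans_eq (by simp)

theorem exists_fixedPoint_of_isBounded_orbit [CompleteSpace E] {G : Type*} [Group G]
    (φ : G →* (E ≃ᵢ E)) (x : E) (hb : Bornology.IsBounded (Set.range fun g => φ g x)) :
    ∃ c, ∀ g, φ g c = c := by
  set S := Set.range fun g => φ g x
  obtain ⟨c, hc, hunique⟩ :=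
    existsUnique_subset_closedBall_chebyshevRadius (Set.range_nonempty fun g => φ g x) hb
  refine ⟨c, fun g => hunique _ ?_⟩
  have himage : φ g '' S = S := by
    rw [← Set.range_comp]
    refine Eq.trans ?_ ((Equiv.mulLeft g).surjective.range_comp fun h => φ h x)
    simp [Function.comp_def]
  calc S = φ g '' S := himage.symm
    _ ⊆ φ g '' closedBall c (chebyshevRadius S) := Set.image_mono hc
    _ = closedBall (φ g c) (chebyshevRadius S) := (φ g).image_closedBall c _

end ChebyshevCentre

section BoundedGroup

/-- A topological group is bounded if every neighbourhood of `1` has a power, with respect to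
pointwise multiplication of sets, that is the whole group. -/
def IsBoundedGroup (G : Type*) [Group G] [TopologicalSpace G] : Prop :=
  ∀ U ∈ 𝓝 (1 : G), ∃ n : ℕ, U ^ n = Set.univ

variable {G : Type*} [Group G]

lemma dist_orbit_le_of_mem_pow {X : Type*} [PseudoMetricSpace X] (φ : G →* (X ≃ᵢ X)) (x : X)
    {U : Set G} {C : ℝ} (hU : ∀ g ∈ U, dist (φ g x) x ≤ C) (n : ℕ) :
    ∀ g ∈ U ^ n, dist (φ g x) x ≤ n * C := by
  induction n with
  | zero => simp
  | succ n ih =>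
    rw [pow_succ]
    rintro _ ⟨g, hg, h, hh, rfl⟩
    calc dist (φ (g * h) x) x ≤ dist (φ (g * h) x) (φ g x) + dist (φ g x) x :=
          dist_triangle _ _ _
      _ = dist (φ h x) x + dist (φ g x) x := by
          rw [map_mul, IsometryEquiv.mul_apply, (φ g).dist_eq]
      _ ≤ C + n * C := add_le_add (hU h hh) (ih g hg)
      _ = (n + 1 : ℕ) * C := by push_cast; ring

variable [TopologicalSpace G]

lemma IsBoundedGroup.isBounded_orbit (hG : IsBoundedGroup G) {X : Type*} [PseudoMetricSpace X]
    (φ : G →* (X ≃ᵢ X)) (x : X)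
    (hx : IsBoundedUnder (· ≤ ·) (𝓝 1) fun g => dist (φ g x) x) :
    Bornology.IsBounded (Set.range fun g => φ g x) := by
  obtain ⟨C, hC⟩ := hx
  obtain ⟨n, hn⟩ := hG _ (eventually_map.1 hC)
  refine (isBounded_iff_subset_closedBall x).2 ⟨n * C, ?_⟩
  rintro _ ⟨g, rfl⟩
  exact dist_orbit_le_of_mem_pow φ x (fun _ hg => hg) n g (hn ▸ Set.mem_univ g)

end BoundedGroup

section Cocycle

variable {𝕜 G K : Type*} [Group G] [SeminormedAddCommGroup K]

/-- The cocycle identity for a representation `π` by linear isometries; unlike the 1-cocycles of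
continuous cohomology, `β` is not required to be continuous. -/
def IsOneCocycle [Semiring 𝕜] [Module 𝕜 K] (π : G →* (K ≃ₗᵢ[𝕜] K)) (β : G → K) : Prop :=
  ∀ g h, β (g * h) = β g + π g (β h)

/-- The affine isometric action `x ↦ π g x + β g` with linear part `π` and translation part
the cocycle `β`. -/
def affineAction [Semiring 𝕜] [Module 𝕜 K] (π : G →* (K ≃ₗᵢ[𝕜] K)) (β : G → K)
    (hβ : IsOneCocycle π β) : G →* (K ≃ᵢ K) :=
  MonoidHom.mk' (fun g => (π g).toIsometryEquiv.trans (IsometryEquiv.addRight (β g))) fun g h => by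
    ext x
    simp [hβ g h, add_left_comm, add_comm]

@[simp]
lemma affineAction_apply [Semiring 𝕜] [Module 𝕜 K] {π : G →* (K ≃ₗᵢ[𝕜] K)} {β : G → K}
    (hβ : IsOneCocycle π β) (g : G) (x : K) : affineAction π β hβ g x = π g x + β g :=
  rfl

end Cocycle

theorem IsBoundedGroup.exists_eq_sub_of_isOneCocycle {𝕜 G K : Type*} [RCLike 𝕜] [Group G]
    [TopologicalSpace G] [NormedAddCommGroup K] [InnerProductSpace 𝕜 K] [CompleteSpace K]
    (hG : IsBoundedGroup G) {π : G →* (K ≃ₗᵢ[𝕜] K)} {β : G → K} (hβ : IsOneCocycle π β)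
    (hβ_bdd : IsBoundedUnder (· ≤ ·) (𝓝 1) fun g => ‖β g‖) :
    ∃ v, ∀ g, β g = π g v - v := by
  let := InnerProductSpace.rclikeToReal 𝕜 K
  have horbit := hG.isBounded_orbit (affineAction π β hβ) 0 (by simpa using hβ_bdd)
  obtain ⟨c, hc⟩ := exists_fixedPoint_of_isBounded_orbit _ _ horbit
  refine ⟨-c, fun g => ?_⟩
  have hfix : π g c + β g = c := hc g
  rw [map_neg, sub_neg_eq_add, neg_add_eq_sub, eq_sub_iff_add_eq', hfix]

section FunctionalCalculus

lemma continuousOn_dslope_of_differentiableAt {𝕜 F : Type*} [NontriviallyNormedField 𝕜]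
    [NormedAddCommGroup F] [NormedSpace 𝕜 F] {f : 𝕜 → F} {a : 𝕜} {s : Set 𝕜}
    (hf : ContinuousOn f s) (ha : DifferentiableAt 𝕜 f a) : ContinuousOn (dslope f a) s := by
  intro z hz
  rcases eq_or_ne z a with rfl | hza
  · exact (continuousAt_dslope_same.2 ha).continuousWithinAt
  · exact (continuousWithinAt_dslope_of_ne hza).2 (hf z hz)

variable {A : Type*} [CStarAlgebra A]

lemma cfc_sub_algebraMap_eq_cfc_dslope_mul (a : A) [IsStarNormal a] (z₀ : ℂ) {f : ℂ → ℂ}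
    (hf : ContinuousOn f (spectrum ℂ a)) (hf' : DifferentiableAt ℂ f z₀) :
    cfc f a - algebraMap ℂ A (f z₀) = cfc (dslope f z₀) a * (a - algebraMap ℂ A z₀) := by
  have hslope := continuousOn_dslope_of_differentiableAt hf hf'
  calc cfc f a - algebraMap ℂ A (f z₀) = cfc (fun z => f z - f z₀) a := by
        rw [cfc_sub f (fun _ => f z₀) a, cfc_const (f z₀) a]
    _ = cfc (fun z => dslope f z₀ z * (z - z₀)) a := by
        refine cfc_congr fun z _ => ?_
        rw [← sub_smul_dslope f z₀ z, smul_eq_mul, mul_comm]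
    _ = cfc (dslope f z₀) a * (a - algebraMap ℂ A z₀) := by
        rw [cfc_mul (dslope f z₀) (fun z => z - z₀) a, cfc_sub (fun z => z) (fun _ => z₀) a,
          cfc_id' ℂ a, cfc_const z₀ a]

lemma isCompactOperator_cfc_sub_algebraMap {H : Type*} [NormedAddCommGroup H]
    [InnerProductSpace ℂ H] [CompleteSpace H] (T : H →L[ℂ] H) [IsStarNormal T] {z₀ : ℂ}
    (hT : IsCompactOperator ⇑(T - algebraMap ℂ (H →L[ℂ] H) z₀)) {f : ℂ → ℂ}
    (hf : ContinuousOn f (spectrum ℂ T)) (hf' : DifferentiableAt ℂ f z₀) :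
    IsCompactOperator ⇑(cfc f T - algebraMap ℂ (H →L[ℂ] H) (f z₀)) := by
  rw [cfc_sub_algebraMap_eq_cfc_dslope_mul T z₀ hf hf']
  exact hT.clm_comp (cfc (dslope f z₀) T)

lemma norm_cpow_inv_nat_of_norm_eq_one {z : ℂ} (hz : ‖z‖ = 1) (n : ℕ) :
    ‖z ^ (n⁻¹ : ℂ)‖ = 1 := by
  rw [Complex.norm_cpow_inv_nat, hz, Real.one_rpow]

lemma norm_cpow_inv_nat_sub_one_le {z : ℂ} (hz : ‖z‖ = 1) (n : ℕ) :
    ‖z ^ (n⁻¹ : ℂ) - 1‖ ≤ Real.pi / n := by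
  have hz0 : z ≠ 0 := norm_ne_zero_iff.1 (by simp [hz])
  have hexp : z ^ (n⁻¹ : ℂ) = Complex.exp (Complex.I * (z.arg / n : ℝ)) := by
    rw [Complex.cpow_def_of_ne_zero hz0, Complex.log, hz, Real.log_one, Complex.ofReal_zero,
      zero_add, Complex.ofReal_div, Complex.ofReal_natCast]
    congr 1
    ring
  calc ‖z ^ (n⁻¹ : ℂ) - 1‖ ≤ ‖z.arg / n‖ := hexp ▸ Real.norm_exp_I_mul_ofReal_sub_one_le
    _ = |z.arg| / n := by rw [norm_div, Real.norm_natCast, Real.norm_eq_abs]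
    _ ≤ Real.pi / n := by gcongr; exact Complex.abs_arg_le_pi z

/-- The principal `n`-th root of an element of a C⋆-algebra, meant for unitaries at distance less
than `2` from `1`: there `z ^ (1 / n)` is continuous on the spectrum, which avoids `-1`. -/
noncomputable def principalRoot (n : ℕ) (u : A) : A :=
  cfc (fun z : ℂ => z ^ (n⁻¹ : ℂ)) u

variable {u : A}

lemma continuousOn_cpow_const_spectrum (hu : u ∈ unitary A) (hu2 : ‖u - 1‖ < 2) (w : ℂ) :
    ContinuousOn (fun z : ℂ => z ^ w) (spectrum ℂ u) := fun _ hz =>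
  (continuousAt_cpow_const
    ((Unitary.spectrum_subset_slitPlane_iff_norm_lt_two hu).2 hu2 hz)).continuousWithinAt

lemma norm_eq_one_of_mem_spectrum (hu : u ∈ unitary A) {z : ℂ} (hz : z ∈ spectrum ℂ u) :
    ‖z‖ = 1 :=
  mem_sphere_zero_iff_norm.1 (Unitary.spectrum_subset_circle (𝕜 := ℂ) ⟨u, hu⟩ hz)

lemma principalRoot_mem_unitary (hu : u ∈ unitary A) (hu2 : ‖u - 1‖ < 2) (n : ℕ) :
    principalRoot n u ∈ unitary A := by
  have := isStarNormal_of_mem_unitary hu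
  rw [principalRoot, cfc_unitary_iff _ u this (continuousOn_cpow_const_spectrum hu hu2 _)]
  intro z hz
  rw [Complex.star_def, Complex.conj_mul',
    norm_cpow_inv_nat_of_norm_eq_one (norm_eq_one_of_mem_spectrum hu hz)]
  norm_num

lemma principalRoot_pow (hu : u ∈ unitary A) (hu2 : ‖u - 1‖ < 2) {n : ℕ} (hn : n ≠ 0) :
    principalRoot n u ^ n = u := by
  have := isStarNormal_of_mem_unitary hu
  rw [principalRoot, ← cfc_pow _ n u (continuousOn_cpow_const_spectrum hu hu2 _)]
  simp only [Complex.cpow_nat_inv_pow _ hn, cfc_id' ℂ u]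

lemma norm_principalRoot_sub_one_le (hu : u ∈ unitary A) (hu2 : ‖u - 1‖ < 2) (n : ℕ) :
    ‖principalRoot n u - 1‖ ≤ Real.pi / n := by
  have := isStarNormal_of_mem_unitary hu
  have hcont := continuousOn_cpow_const_spectrum hu hu2 (n⁻¹ : ℂ)
  rw [principalRoot, ← cfc_const_one ℂ u, ← cfc_sub (fun z : ℂ => z ^ (n⁻¹ : ℂ)) (fun _ => 1) u]
  exact norm_cfc_le (by positivity) fun z hz =>
    norm_cpow_inv_nat_sub_one_le (norm_eq_one_of_mem_spectrum hu hz) n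

lemma isCompactOperator_principalRoot_sub_one {H : Type*} [NormedAddCommGroup H]
    [InnerProductSpace ℂ H] [CompleteSpace H] {u : H →L[ℂ] H} (hu : u ∈ unitary (H →L[ℂ] H))
    (hu2 : ‖u - 1‖ < 2) (hcpt : IsCompactOperator ⇑(u - 1)) (n : ℕ) :
    IsCompactOperator ⇑(principalRoot n u - 1) := by
  have := isStarNormal_of_mem_unitary hu
  have hdiff : DifferentiableAt ℂ (fun z : ℂ => z ^ (n⁻¹ : ℂ)) 1 :=
    differentiableAt_id.cpow_const Complex.one_mem_slitPlane
  have h := isCompactOperator_cfc_sub_algebraMap u (by rwa [map_one])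
    (continuousOn_cpow_const_spectrum hu hu2 _) hdiff
  rwa [Complex.one_cpow, map_one] at h

end FunctionalCalculus

section ProjectionPhase

variable {R A : Type*} [CommRing R] [Ring A] [Algebra R A]

/-- For an idempotent `p`, the element acting as the scalar `c` on the range of `p` and as `1`
on the range of `1 - p`. -/
def projectionPhase (c : R) (p : A) : A :=
  1 + (c - 1) • p

lemma projectionPhase_mul_projectionPhase {p : A} (hp : IsIdempotentElem p) (c d : R) :
    projectionPhase c p * projectionPhase d p = projectionPhase (c * d) p := by
  simp only [projectionPhase, add_mul, mul_add, smul_mul_smul_comm, hp.eq, one_mul, mul_one]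
  module

lemma mul_projectionPhase {p : A} (hp : IsIdempotentElem p) (c : R) :
    p * projectionPhase c p = c • p := by
  simp only [projectionPhase, mul_add, mul_smul_comm, hp.eq, mul_one]
  module

lemma star_projectionPhase [StarRing R] [StarRing A] [StarModule R A] {p : A}
    (hp : IsSelfAdjoint p) (c : R) : star (projectionPhase c p) = projectionPhase (star c) p := by
  simp [projectionPhase, hp.star_eq]

lemma projectionPhase_mem_unitary [StarRing R] [StarRing A] [StarModule R A] {p : A}
    (hp : IsStarProjection p) {c : R} (hc : c ∈ unitary R) : projectionPhase c p ∈ unitary A := by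
  simp only [Unitary.mem_iff, star_projectionPhase hp.isSelfAdjoint,
    projectionPhase_mul_projectionPhase hp.isIdempotentElem, Unitary.star_mul_self_of_mem hc,
    Unitary.mul_star_self_of_mem hc]
  simp [projectionPhase]

end ProjectionPhase

section NegOneEigenspace

lemma mul_eq_neg_of_mul_eq_neg {A : Type*} [Ring A] [StarRing A] {u p : A} (hu : u ∈ unitary A)
    (hp : IsSelfAdjoint p) (h : u * p = -p) : p * u = -p := by
  have hstar : p * star u = -p := by simpa [hp.star_eq] using congrArg star h
  calc p * u = -(p * star u) * u := by rw [hstar, neg_neg]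
    _ = -p := by rw [neg_mul, mul_assoc, Unitary.star_mul_self_of_mem hu, mul_one]

section NormedSpace

variable {𝕜 X : Type*} [NontriviallyNormedField 𝕜] [NormedAddCommGroup X] [NormedSpace 𝕜 X]

lemma projectionPhase_apply_eq_self {p : X →L[𝕜] X} {x : X} (hx : p x = 0) (c : 𝕜) :
    projectionPhase c p x = x := by
  simp [projectionPhase, hx]

lemma apply_eq_zero_of_mul_eq_smul {p v : X →L[𝕜] X} {c : 𝕜} (h : p * v = c • p) (hc : c ≠ -1)
    {x : X} (hx : v x = -x) : p x = 0 := by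
  have hpx : -p x = c • p x := by simpa [hx] using DFunLike.congr_fun h x
  have hzero : (c + 1) • p x = 0 := by rw [add_smul, one_smul, ← hpx, neg_add_cancel]
  exact (smul_eq_zero.1 hzero).resolve_left fun h => hc (eq_neg_of_add_eq_zero_left h)

lemma eq_zero_of_projectionPhase_apply_eq_neg [CharZero 𝕜] {p : X →L[𝕜] X}
    (hp : IsIdempotentElem p) {c : 𝕜} (hc : c ≠ -1) {x : X}
    (hx : projectionPhase c p x = -x) : x = 0 := by
  have hpx := apply_eq_zero_of_mul_eq_smul (mul_projectionPhase hp c) hc hx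
  have := IsAddTorsionFree.of_isTorsionFree 𝕜 X
  exact self_eq_neg.1 ((projectionPhase_apply_eq_self hpx c).symm.trans hx)

lemma hasEigenvalue_of_isCompactOperator_sub_algebraMap [CompleteSpace X] {T : X →L[𝕜] X}
    {z₀ μ : 𝕜} (hT : IsCompactOperator ⇑(T - algebraMap 𝕜 (X →L[𝕜] X) z₀)) (hμ : μ ≠ z₀)
    (hmem : μ ∈ spectrum 𝕜 T) : Module.End.HasEigenvalue (T : X →ₗ[𝕜] X) μ := by
  have hmem' : μ - z₀ ∈ spectrum 𝕜 (T - algebraMap 𝕜 (X →L[𝕜] X) z₀) := by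
    rw [← spectrum.sub_singleton_eq]
    exact Set.sub_mem_sub hmem rfl
  obtain ⟨x, hx⟩ :=
    ((hT.hasEigenvalue_iff_mem_spectrum (sub_ne_zero.2 hμ)).2 hmem').exists_hasEigenvector
  refine Module.End.hasEigenvalue_of_hasEigenvector (x := x)
    ⟨Module.End.mem_eigenspace_iff.2 ?_, hx.2⟩
  simpa [sub_smul, Algebra.algebraMap_eq_smul_one] using hx.apply_eq_smul

end NormedSpace

variable {H : Type*} [NormedAddCommGroup H] [InnerProductSpace ℂ H] [CompleteSpace H]

lemma norm_sub_one_lt_two_of_forall_apply_eq_neg {u : H →L[ℂ] H} (hu : u ∈ unitary (H →L[ℂ] H))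
    (hcpt : IsCompactOperator ⇑(u - 1)) (h : ∀ x, u x = -x → x = 0) : ‖u - 1‖ < 2 := by
  rw [Unitary.norm_sub_one_lt_two_iff hu]
  intro hmem
  obtain ⟨x, hx⟩ := (hasEigenvalue_of_isCompactOperator_sub_algebraMap (z₀ := 1)
    (by rwa [map_one]) (by norm_num) hmem).exists_hasEigenvector
  exact hx.2 (h x (by simpa using hx.apply_eq_smul))

/-- The orthogonal projection onto the eigenspace of `u` for the eigenvalue `-1`. -/
noncomputable def negOneProjection (u : H →L[ℂ] H) : H →L[ℂ] H :=
  (u + 1).ker.starProjection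

variable {u : H →L[ℂ] H}

lemma isStarProjection_negOneProjection : IsStarProjection (negOneProjection u) :=
  isStarProjection_starProjection

lemma negOneProjection_apply_of_apply_eq_neg {x : H} (hx : u x = -x) :
    negOneProjection u x = x :=
  Submodule.starProjection_eq_self_iff.2 (by simp [hx])

lemma mul_negOneProjection : u * negOneProjection u = -negOneProjection u := by
  ext x
  have hx : negOneProjection u x ∈ (u + 1).ker := Submodule.starProjection_apply_mem _ x
  exact eq_neg_of_add_eq_zero_left (by simpa using hx)

lemma isCompactOperator_negOneProjection (hcpt : IsCompactOperator ⇑(u - 1)) :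
    IsCompactOperator (negOneProjection u) := by
  have h : negOneProjection u = (-(1 / 2) : ℂ) • ((u - 1) * negOneProjection u) := by
    rw [sub_mul, mul_negOneProjection, one_mul]
    module
  rw [h]
  exact (hcpt.comp_clm (negOneProjection u)).smul (-(1 / 2) : ℂ)

lemma isCompactOperator_projectionPhase_sub_one (hcpt : IsCompactOperator ⇑(u - 1)) (c : ℂ) :
    IsCompactOperator ⇑(projectionPhase c (negOneProjection u) - 1) := by
  rw [projectionPhase, add_sub_cancel_left]
  exact (isCompactOperator_negOneProjection hcpt).smul (c - 1)

lemma eq_zero_of_mul_projectionPhase_apply_eq_neg (hu : u ∈ unitary (H →L[ℂ] H)) {c : ℂ}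
    (hc : c ≠ 1) {x : H} (hx : (u * projectionPhase c (negOneProjection u)) x = -x) : x = 0 := by
  have hp := isStarProjection_negOneProjection (u := u)
  have hmul : negOneProjection u * (u * projectionPhase c (negOneProjection u)) =
      (-c) • negOneProjection u := by
    rw [← mul_assoc, mul_eq_neg_of_mul_eq_neg hu hp.isSelfAdjoint mul_negOneProjection, neg_mul,
      mul_projectionPhase hp.isIdempotentElem, neg_smul]
  have hpx := apply_eq_zero_of_mul_eq_smul hmul (by simpa using hc) hx
  have hux : u x = -x := by
    rwa [mul_apply_eq_comp, projectionPhase_apply_eq_self hpx] at hx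
  rw [← negOneProjection_apply_of_apply_eq_neg hux, hpx]

end NegOneEigenspace

namespace UinfGroup

variable {H : Type*} [NormedAddCommGroup H] [InnerProductSpace ℂ H] [CompleteSpace H]

lemma dist_one (u : UinfGroup H) :
    dist u 1 = ‖((u : unitary (H →L[ℂ] H)) : H →L[ℂ] H) - 1‖ :=
  dist_eq_norm ((u : unitary (H →L[ℂ] H)) : H →L[ℂ] H) 1

theorem exists_mul_eq_dist_one_lt_two (u : UinfGroup H) :
    ∃ v w : UinfGroup H, v * w = u ∧ dist v 1 < 2 ∧ dist w 1 < 2 := by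
  obtain ⟨⟨u, hu⟩, hcpt⟩ := u
  have hI : -Complex.I ∈ unitary ℂ := by simp [Unitary.mem_iff]
  have hp := isStarProjection_negOneProjection (u := u)
  let w : UinfGroup H := ⟨⟨_, projectionPhase_mem_unitary hp hI⟩,
    isCompactOperator_projectionPhase_sub_one hcpt (-Complex.I)⟩
  let v : UinfGroup H := ⟨⟨u, hu⟩, hcpt⟩ * w⁻¹
  have hv : ((v : unitary (H →L[ℂ] H)) : H →L[ℂ] H) =
      u * projectionPhase Complex.I (negOneProjection u) := by
    change u * star (projectionPhase (-Complex.I) (negOneProjection u)) = _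
    simp [star_projectionPhase hp.isSelfAdjoint]
  refine ⟨v, w, inv_mul_cancel_right _ w, ?_, ?_⟩
  · rw [dist_one]
    refine norm_sub_one_lt_two_of_forall_apply_eq_neg v.1.2 v.2 fun x hx => ?_
    rw [hv] at hx
    exact eq_zero_of_mul_projectionPhase_apply_eq_neg hu (by simp [Complex.ext_iff]) hx
  · rw [dist_one]
    exact norm_sub_one_lt_two_of_forall_apply_eq_neg w.1.2 w.2 fun x hx =>
      eq_zero_of_projectionPhase_apply_eq_neg hp.isIdempotentElem (by simp [Complex.ext_iff]) hx

theorem exists_pow_eq_dist_one_le {u : UinfGroup H} (hu : dist u 1 < 2) {n : ℕ} (hn : n ≠ 0) :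
    ∃ v : UinfGroup H, v ^ n = u ∧ dist v 1 ≤ Real.pi / n := by
  rw [dist_one] at hu
  let v : UinfGroup H := ⟨⟨_, principalRoot_mem_unitary u.1.2 hu n⟩,
    isCompactOperator_principalRoot_sub_one u.1.2 hu u.2 n⟩
  refine ⟨v, Subtype.ext (Subtype.ext (principalRoot_pow u.1.2 hu hn)), ?_⟩
  rw [dist_one]
  exact norm_principalRoot_sub_one_le u.1.2 hu n

theorem isBoundedGroup : IsBoundedGroup (UinfGroup H) := by
  intro U hU
  obtain ⟨δ, hδ, hδU⟩ := Metric.mem_nhds_iff.1 hU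
  obtain ⟨n, hn⟩ := exists_nat_gt (Real.pi / δ)
  have hn0 : (0 : ℝ) < n := (div_pos Real.pi_pos hδ).trans hn
  have hball {g : UinfGroup H} (hg : dist g 1 < 2) : g ∈ U ^ n := by
    obtain ⟨r, rfl, hr⟩ := exists_pow_eq_dist_one_le hg (Nat.cast_ne_zero.1 hn0.ne')
    exact Set.pow_mem_pow (hδU (hr.trans_lt ((div_lt_comm₀ hδ hn0).1 hn)))
  refine ⟨n + n, Set.eq_univ_of_forall fun g => ?_⟩
  obtain ⟨v, w, rfl, hv, hw⟩ := exists_mul_eq_dist_one_lt_two g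
  exact pow_add U n n ▸ Set.mul_mem_mul (hball hv) (hball hw)

end UinfGroup

theorem uinf_firstCohomology_vanishes_general {𝕜 H K : Type*} [RCLike 𝕜] [NormedAddCommGroup H]
    [InnerProductSpace ℂ H] [CompleteSpace H] [NormedAddCommGroup K] [InnerProductSpace 𝕜 K]
    [CompleteSpace K] (π : UinfGroup H →* (K ≃ₗᵢ[𝕜] K)) (β : UinfGroup H → K)
    (hβ_bdd : IsBoundedUnder (· ≤ ·) (𝓝 1) fun g => ‖β g‖)
    (hβ : ∀ g h, β (g * h) = β g + π g (β h)) : ∃ v, ∀ g, β g = π g v - v :=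
  UinfGroup.isBoundedGroup.exists_eq_sub_of_isOneCocycle hβ hβ_bdd

/-- For `G = U_∞(H)`, the group of unitary operators `u` on a complex Hilbert
space `H` with `u - 1` compact, equipped with the operator-norm topology, every continuous
1-cocycle of any continuous unitary representation `(π, K)` of `G` is a 1-coboundary,
i.e. `H¹(G, π, K) = {0}`. -/
theorem uinf_firstCohomology_vanishes
    {H : Type*} [NormedAddCommGroup H] [InnerProductSpace ℂ H] [CompleteSpace H]
    {K : Type*} [NormedAddCommGroup K] [InnerProductSpace ℂ K] [CompleteSpace K]
    -- `(π, K)` is a continuous unitary representation of `U_∞(H)`: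
    (π : ↥(UinfGroup H) →* (K ≃ₗᵢ[ℂ] K))
    (hπ : ∀ v : K, Continuous fun g : ↥(UinfGroup H) => π g v)
    -- `β` is a continuous 1-cocycle:
    (β : ↥(UinfGroup H) → K) (hβcont : Continuous β)
    (hβcoc : ∀ g h : ↥(UinfGroup H), β (g * h) = β g + π g (β h)) :
    -- then `β` is a 1-coboundary:
    ∃ v : K, ∀ g : ↥(UinfGroup H), β g = π g v - v := by
  exact uinf_firstCohomology_vanishes_general π β (hβcont.norm.tendsto 1).isBoundedUnder_le hβcoc
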